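/- For every unconstrained coefficient vector β ∈ ℝ^D, the transformation H is strictly monotonically increasing on all of ℝ. -/

import Mathlib

open MeasureTheory Finset

noncomputable section

/-- The cardinal cubic B-spline. -/
def cubicN (t : ℝ) : ℝ :=
  if 0 ≤ t ∧ t < 1 then t ^ 3 / 6
  else if 1 ≤ t ∧ t < 2 then (-3 * t ^ 3 + 12 * t ^ 2 - 12 * t + 4) / 6
  else if 2 ≤ t ∧ t < 3 then (3 * t ^ 3 - 24 * t ^ 2 + 60 * t - 44) / 6
  else if 3 ≤ t ∧ t ≤ 4 then (4 - t) ^ 3 / 6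
  else 0

/-- Equidistant knots `k_j = k0 + j·k`. -/
def knot (k0 k : ℝ) (j : ℤ) : ℝ := k0 + (j : ℝ) * k

/-- Cubic B-spline basis functions `B_j(x) = N((x − k_{j−3})/k)` for `j = 1, …, J`. -/
def Bspl (k0 k : ℝ) (j : ℕ) (x : ℝ) : ℝ := cubicN ((x - knot k0 k ((j : ℤ) - 3)) / k)

/-- The coefficients `γ_1, …, γ_J` (with `J = D + 7`, `m = D + 5`), defined from the
unconstrained vector `β ∈ ℝ^D`. -/
def gam (D : ℕ) (k0 k : ℝ) (β : Fin D → ℝ) (j : ℕ) : ℝ :=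
  if j = 1 then k0
  else if j = 2 ∨ j = 3 ∨ j = 4 ∨ j = D + 5 ∨ j = D + 6 ∨ j = D + 7 then Real.log k
  else if h : 5 ≤ j ∧ j ≤ D + 4 then
    β ⟨j - 5, by omega⟩ - Real.log ((∑ d, Real.exp (β d)) / ((D : ℝ) * k))
  else 0

/-- The transformation `H`: a cubic B-spline with coefficients
`γ_1 + ∑_{ℓ=2}^j exp(γ_ℓ)` on `[k_1, k_m]` (with `m = D + 5`), and the identity outside. -/
def Hfun (D : ℕ) (k0 k : ℝ) (β : Fin D → ℝ) (x : ℝ) : ℝ :=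
  if knot k0 k 1 ≤ x ∧ x ≤ knot k0 k ((D : ℤ) + 5) then
    ∑ j ∈ Finset.Icc 1 (D + 7),
      Bspl k0 k j x * (gam D k0 k β 1 + ∑ l ∈ Finset.Icc 2 j, Real.exp (gam D k0 k β l))
  else x

/-!
On each knot interval a cubic B-spline sum is a cubic whose derivative is a combination of the
differences of consecutive coefficients, with weights positive in the interior, so increasing
coefficients give an increasing spline on `[k_1, k_m]`. The coefficients of `H` increase because
their differences are exponentials. The normalisation of `β` makes the interior differences sum
to `D * k`, so the first four and the last four coefficients lie on the line `c_j = k_{j-1}`;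
hence `H` fixes `k_1` and `k_m`, where it meets the identity.
-/

section Gluing

variable {α β : Type*} [LinearOrder α]

lemma strictMonoOn_Icc_of_forall_Icc_succ [Preorder β] {f : α → β} {t : ℕ → α} (ht : Monotone t)
    {m n : ℕ} (hmn : m ≤ n)
    (hf : ∀ i, m ≤ i → i < n → StrictMonoOn f (Set.Icc (t i) (t (i + 1)))) :
    StrictMonoOn f (Set.Icc (t m) (t n)) := by
  induction n, hmn using Nat.le_induction with
  | base => simp
  | succ n hmn ih =>
    have hm : t m ≤ t n := ht hmn
    have hn : t n ≤ t (n + 1) := ht n.le_succ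
    rw [← Set.Icc_union_Icc_eq_Icc hm hn]
    exact (ih fun i hmi hin => hf i hmi (hin.trans n.lt_succ_self)).union
      (hf n hmn n.lt_succ_self) (isGreatest_Icc hm) (isLeast_Icc hn)

lemma strictMono_ite_mem_Icc_id {g : α → α} {a b : α}
    (hg : StrictMonoOn g (Set.Icc a b)) (ha : g a = a) (hb : g b = b) :
    StrictMono fun x => if a ≤ x ∧ x ≤ b then g x else x := by
  have mapsTo : ∀ x, a ≤ x ∧ x ≤ b → a ≤ g x ∧ g x ≤ b := fun x hx => by
    have hab : a ≤ b := hx.1.trans hx.2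
    exact ⟨ha.ge.trans (hg.monotoneOn ⟨le_rfl, hab⟩ hx hx.1),
      (hg.monotoneOn hx ⟨hab, le_rfl⟩ hx.2).trans hb.le⟩
  intro x y hxy
  dsimp only
  split_ifs with hx hy hy
  · exact hg hx hy hxy
  · have hby : b < y := by grind
    exact (mapsTo x hx).2.trans_lt hby
  · have hxa : x < a := by grind
    exact hxa.trans_le (mapsTo y hy).1
  · exact hxy

end Gluing

section CardinalSpline

lemma cubicN_of_nonpos {t : ℝ} (ht : t ≤ 0) : cubicN t = 0 := by
  grind [cubicN]

lemma cubicN_of_four_le {t : ℝ} (ht : 4 ≤ t) : cubicN t = 0 := by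
  rcases ht.eq_or_lt with rfl | ht
  · norm_num [cubicN]
  · grind [cubicN]

variable {u : ℝ}

lemma cubicN_of_mem_Icc (hu : u ∈ Set.Icc 0 1) : cubicN u = u ^ 3 / 6 := by
  grind [cubicN]

lemma cubicN_add_one (hu : u ∈ Set.Icc 0 1) :
    cubicN (u + 1) = (-3 * u ^ 3 + 3 * u ^ 2 + 3 * u + 1) / 6 := by
  grind [cubicN]

lemma cubicN_add_two (hu : u ∈ Set.Icc 0 1) :
    cubicN (u + 2) = (3 * u ^ 3 - 6 * u ^ 2 + 4) / 6 := by
  grind [cubicN]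

lemma cubicN_add_three (hu : u ∈ Set.Icc 0 1) : cubicN (u + 3) = (1 - u) ^ 3 / 6 := by
  grind [cubicN]

end CardinalSpline

section Segment

/-- The polynomial piece of a cubic B-spline sum on one knot interval, in the local coordinate
`u ∈ [0, 1]`; `a`, `b`, `c`, `d` are the coefficients of the four basis functions that do not
vanish there, from left to right. -/
def cubicSegment (a b c d u : ℝ) : ℝ :=
  ((1 - u) ^ 3 * a + (3 * u ^ 3 - 6 * u ^ 2 + 4) * b + (-3 * u ^ 3 + 3 * u ^ 2 + 3 * u + 1) * c +
    u ^ 3 * d) / 6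

variable (a b c d : ℝ)

lemma cubicSegment_zero : cubicSegment a b c d 0 = (a + 4 * b + c) / 6 := by
  simp [cubicSegment]

lemma cubicSegment_one : cubicSegment a b c d 1 = (b + 4 * c + d) / 6 := by
  norm_num [cubicSegment]

lemma hasDerivAt_cubicSegment (u : ℝ) :
    HasDerivAt (cubicSegment a b c d)
      (((1 - u) ^ 2 * (b - a) + (1 + 2 * u * (1 - u)) * (c - b) + u ^ 2 * (d - c)) / 2) u := by
  have hu := hasDerivAt_id' u
  have hA := ((hu.const_sub 1).pow 3).mul_const a
  have hB := ((((hu.pow 3).const_mul 3).sub ((hu.pow 2).const_mul 6)).add_const 4).mul_const b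
  have hC := (((((hu.pow 3).const_mul (-3)).add ((hu.pow 2).const_mul 3)).add
    (hu.const_mul 3)).add_const 1).mul_const c
  have hD := (hu.pow 3).mul_const d
  refine ((((hA.add hB).add hC).add hD).div_const 6).congr_deriv ?_
  norm_num
  ring

variable {a b c d}

lemma cubicSegment_strictMonoOn (hab : a ≤ b) (hbc : b < c) (hcd : c ≤ d) :
    StrictMonoOn (cubicSegment a b c d) (Set.Icc 0 1) := by
  refine strictMonoOn_of_hasDerivWithinAt_pos (convex_Icc 0 1)
    (fun u _ => (hasDerivAt_cubicSegment a b c d u).continuousAt.continuousWithinAt)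
    (fun u _ => (hasDerivAt_cubicSegment a b c d u).hasDerivWithinAt) fun u hu => ?_
  obtain ⟨hu₀, hu₁⟩ : 0 < u ∧ u < 1 := by rwa [interior_Icc] at hu
  have := sub_nonneg.2 hab
  have := sub_pos.2 hbc
  have := sub_nonneg.2 hcd
  have := sub_pos.2 hu₁
  positivity

end Segment

section SplineSum

variable {k0 k : ℝ}

lemma knot_add_one (k0 k : ℝ) (j : ℤ) : knot k0 k (j + 1) = knot k0 k j + k := by
  simp only [knot, Int.cast_add, Int.cast_one]
  ring

lemma knot_monotone (hk : 0 ≤ k) : Monotone (knot k0 k) :=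
  monotone_int_of_le_succ fun j => by simpa only [knot_add_one] using le_add_of_nonneg_right hk

lemma Bspl_eq_cubicN (hk : k ≠ 0) (i j : ℕ) (x : ℝ) :
    Bspl k0 k j x = cubicN ((x - knot k0 k i) / k + (i - j + 3)) := by
  unfold Bspl knot
  congr 1
  push_cast
  field_simp
  ring

lemma sub_knot_div_mem_Icc (hk : 0 < k) {i : ℤ} {x : ℝ}
    (hx : x ∈ Set.Icc (knot k0 k i) (knot k0 k (i + 1))) :
    (x - knot k0 k i) / k ∈ Set.Icc (0 : ℝ) 1 := by
  rw [knot_add_one] at hx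
  exact ⟨div_nonneg (sub_nonneg.2 hx.1) hk.le, (div_le_one hk).2 (by linarith [hx.2])⟩

lemma Bspl_eq_zero (hk : 0 < k) {i j : ℕ} (hij : j < i ∨ i + 3 < j) {x : ℝ}
    (hx : x ∈ Set.Icc (knot k0 k i) (knot k0 k (i + 1))) : Bspl k0 k j x = 0 := by
  obtain ⟨hu₀, hu₁⟩ := sub_knot_div_mem_Icc hk hx
  rw [Bspl_eq_cubicN hk.ne' i]
  rcases hij with hji | hij
  · have : (j : ℝ) + 1 ≤ i := by exact_mod_cast hji
    exact cubicN_of_four_le (by linarith)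
  · have : (i : ℝ) + 3 + 1 ≤ j := by exact_mod_cast hij
    exact cubicN_of_nonpos (by linarith)

/-- The cubic B-spline `∑_{j=1}^J c_j B_j` on equidistant knots; it is the spline part of `Hfun`
for `J = D + 7` and `c = splineCoef D k0 k β`. -/
def splineSum (k0 k : ℝ) (J : ℕ) (c : ℕ → ℝ) (x : ℝ) : ℝ :=
  ∑ j ∈ Finset.Icc 1 J, Bspl k0 k j x * c j

variable {J : ℕ} {c : ℕ → ℝ}

lemma splineSum_eq_cubicSegment (hk : 0 < k) (c : ℕ → ℝ) {i : ℕ} (hi : 1 ≤ i) (hiJ : i + 3 ≤ J)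
    {x : ℝ} (hx : x ∈ Set.Icc (knot k0 k i) (knot k0 k (i + 1))) :
    splineSum k0 k J c x =
      cubicSegment (c i) (c (i + 1)) (c (i + 2)) (c (i + 3)) ((x - knot k0 k i) / k) := by
  have support : ∑ j ∈ Finset.Icc i (i + 3), Bspl k0 k j x * c j = splineSum k0 k J c x := by
    refine Finset.sum_subset (Finset.Icc_subset_Icc hi hiJ) fun j _ hj => ?_
    rw [Finset.mem_Icc] at hj
    rw [Bspl_eq_zero hk (by omega) hx, zero_mul]
  have hu := sub_knot_div_mem_Icc hk hx
  rw [← support, Finset.sum_Icc_succ_top (by omega), Finset.sum_Icc_succ_top (by omega),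
    Finset.sum_Icc_succ_top (by omega), Finset.Icc_self, Finset.sum_singleton]
  simp only [Bspl_eq_cubicN hk.ne' i]
  generalize (x - knot k0 k i) / k = u at hu ⊢
  have h₀ : u + ((i : ℝ) - i + 3) = u + 3 := by ring
  have h₁ : u + ((i : ℝ) - (i + 1 : ℕ) + 3) = u + 2 := by push_cast; ring
  have h₂ : u + ((i : ℝ) - (i + 1 + 1 : ℕ) + 3) = u + 1 := by push_cast; ring
  have h₃ : u + ((i : ℝ) - (i + 2 + 1 : ℕ) + 3) = u := by push_cast; ring
  rw [h₀, h₁, h₂, h₃, cubicN_of_mem_Icc hu, cubicN_add_one hu, cubicN_add_two hu,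
    cubicN_add_three hu, cubicSegment]
  ring

lemma splineSum_knot (hk : 0 < k) (c : ℕ → ℝ) {i : ℕ} (hi : 1 ≤ i) (hiJ : i + 3 ≤ J) :
    splineSum k0 k J c (knot k0 k i) = (c i + 4 * c (i + 1) + c (i + 2)) / 6 := by
  rw [splineSum_eq_cubicSegment hk c hi hiJ ⟨le_rfl, knot_monotone hk.le (by omega)⟩, sub_self,
    zero_div, cubicSegment_zero]

lemma splineSum_knot_add_one (hk : 0 < k) (c : ℕ → ℝ) {i : ℕ} (hi : 1 ≤ i) (hiJ : i + 3 ≤ J) :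
    splineSum k0 k J c (knot k0 k (i + 1)) = (c (i + 1) + 4 * c (i + 2) + c (i + 3)) / 6 := by
  rw [splineSum_eq_cubicSegment hk c hi hiJ ⟨knot_monotone hk.le (by omega), le_rfl⟩,
    knot_add_one, add_sub_cancel_left, div_self hk.ne', cubicSegment_one]

lemma splineSum_strictMonoOn_Icc_knot (hk : 0 < k) (hc : StrictMonoOn c (Set.Icc 1 J)) {i : ℕ}
    (hi : 1 ≤ i) (hiJ : i + 3 ≤ J) :
    StrictMonoOn (splineSum k0 k J c) (Set.Icc (knot k0 k i) (knot k0 k (i + 1))) := by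
  have step : ∀ j, i ≤ j → j < i + 3 → c j < c (j + 1) := fun j hij hji =>
    hc ⟨by omega, by omega⟩ ⟨by omega, by omega⟩ j.lt_succ_self
  have segment := cubicSegment_strictMonoOn (step i le_rfl (by omega)).le
    (step (i + 1) (by omega) (by omega)) (step (i + 2) (by omega) (by omega)).le
  intro x hx y hy hxy
  rw [splineSum_eq_cubicSegment hk c hi hiJ hx, splineSum_eq_cubicSegment hk c hi hiJ hy]
  exact segment (sub_knot_div_mem_Icc hk hx) (sub_knot_div_mem_Icc hk hy) (by gcongr)

lemma splineSum_strictMonoOn (hk : 0 < k) (hc : StrictMonoOn c (Set.Icc 1 J)) {m n : ℕ}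
    (hm : 1 ≤ m) (hmn : m ≤ n) (hnJ : n + 2 ≤ J) :
    StrictMonoOn (splineSum k0 k J c) (Set.Icc (knot k0 k m) (knot k0 k n)) := by
  refine strictMonoOn_Icc_of_forall_Icc_succ (t := fun i : ℕ => knot k0 k i)
    ((knot_monotone hk.le).comp Nat.mono_cast) hmn fun i hmi hin => ?_
  rw [Nat.cast_succ]
  exact splineSum_strictMonoOn_Icc_knot hk hc (hm.trans hmi) (by omega)

end SplineSum

section Coefficients

lemma sum_exp_sub_log_sum_exp_div {ι : Type*} [Fintype ι] [Nonempty ι] (β : ι → ℝ) {s : ℝ}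
    (hs : 0 < s) : ∑ i, Real.exp (β i - Real.log ((∑ d, Real.exp (β d)) / s)) = s := by
  have sum_pos : 0 < ∑ d, Real.exp (β d) :=
    Finset.sum_pos (fun d _ => Real.exp_pos (β d)) Finset.univ_nonempty
  simp only [Real.exp_sub, Real.exp_log (div_pos sum_pos hs)]
  rw [← Finset.sum_div, div_div_cancel₀ sum_pos.ne']

variable {D : ℕ} {k0 k : ℝ} {β : Fin D → ℝ}

/-- The spline coefficients `γ_1 + ∑_{ℓ=2}^j exp(γ_ℓ)` of `Hfun`. The index starts at `1`, as for
`gam`; the value at `0` is junk. -/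
def splineCoef (D : ℕ) (k0 k : ℝ) (β : Fin D → ℝ) (j : ℕ) : ℝ :=
  gam D k0 k β 1 + ∑ l ∈ Finset.Icc 2 j, Real.exp (gam D k0 k β l)

lemma splineCoef_one : splineCoef D k0 k β 1 = k0 := by
  simp [splineCoef, gam]

lemma splineCoef_succ {j : ℕ} (hj : 1 ≤ j) :
    splineCoef D k0 k β (j + 1) = splineCoef D k0 k β j + Real.exp (gam D k0 k β (j + 1)) := by
  rw [splineCoef, splineCoef, Finset.sum_Icc_succ_top (by omega), add_assoc]

lemma splineCoef_strictMonoOn : StrictMonoOn (splineCoef D k0 k β) (Set.Ici 1) :=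
  strictMonoOn_of_lt_add_one Set.ordConnected_Ici fun j _ hj _ => by
    rw [splineCoef_succ hj]
    exact lt_add_of_pos_right _ (Real.exp_pos _)

lemma exp_gam_of_boundary (hk : 0 < k) {j : ℕ}
    (hj : j = 2 ∨ j = 3 ∨ j = 4 ∨ j = D + 5 ∨ j = D + 6 ∨ j = D + 7) :
    Real.exp (gam D k0 k β j) = k := by
  rw [gam, if_neg (by omega), if_pos hj, Real.exp_log hk]

lemma gam_interior (i : Fin D) :
    gam D k0 k β (i + 5) = β i - Real.log ((∑ d, Real.exp (β d)) / (D * k)) := by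
  rw [gam, if_neg (by omega), if_neg (by omega), dif_pos (by omega)]
  rfl

lemma splineCoef_eq_knot_of_exp_gam_eq {i j : ℕ} (hi : 1 ≤ i) (hij : i ≤ j)
    (hcoef : splineCoef D k0 k β i = knot k0 k (i - 1))
    (hexp : ∀ l, i < l → l ≤ j → Real.exp (gam D k0 k β l) = k) :
    splineCoef D k0 k β j = knot k0 k (j - 1) := by
  induction j, hij using Nat.le_induction with
  | base => exact hcoef
  | succ j hij ih =>
    rw [splineCoef_succ (hi.trans hij), ih fun l hil hlj => hexp l hil (by omega),
      hexp (j + 1) (by omega) le_rfl, ← knot_add_one]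
    congr 1
    push_cast
    ring

lemma splineCoef_eq_knot_left (hk : 0 < k) {j : ℕ} (hj : 1 ≤ j) (hj' : j ≤ 4) :
    splineCoef D k0 k β j = knot k0 k (j - 1) :=
  splineCoef_eq_knot_of_exp_gam_eq le_rfl hj (by simp [splineCoef_one, knot])
    fun _ _ _ => exp_gam_of_boundary hk (by omega)

lemma splineCoef_add_four (hD : 1 ≤ D) (hk : 0 < k) :
    splineCoef D k0 k β (D + 4) = splineCoef D k0 k β 4 + D * k := by
  have : Nonempty (Fin D) := ⟨⟨0, hD⟩⟩
  have hDk : 0 < D * k := mul_pos (by exact_mod_cast hD) hk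
  rw [← sub_eq_iff_eq_add']
  calc splineCoef D k0 k β (D + 4) - splineCoef D k0 k β 4
      = ∑ i ∈ Finset.range D, (splineCoef D k0 k β (i + 1 + 4) - splineCoef D k0 k β (i + 4)) := by
        rw [Finset.sum_range_sub fun i => splineCoef D k0 k β (i + 4), zero_add]
    _ = ∑ i ∈ Finset.range D, Real.exp (gam D k0 k β (i + 5)) :=
        Finset.sum_congr rfl fun i _ => by
          rw [add_right_comm, splineCoef_succ (by omega), add_sub_cancel_left]
    _ = ∑ i : Fin D, Real.exp (β i - Real.log ((∑ d, Real.exp (β d)) / (D * k))) := by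
        simp only [Finset.sum_range, gam_interior]
    _ = D * k := sum_exp_sub_log_sum_exp_div β hDk

lemma splineCoef_eq_knot_right (hD : 1 ≤ D) (hk : 0 < k) {j : ℕ} (hj : D + 4 ≤ j)
    (hj' : j ≤ D + 7) : splineCoef D k0 k β j = knot k0 k (j - 1) := by
  refine splineCoef_eq_knot_of_exp_gam_eq (by omega) hj ?_
    fun _ _ _ => exp_gam_of_boundary hk (by omega)
  rw [splineCoef_add_four hD hk, splineCoef_eq_knot_left hk (by omega) le_rfl]
  simp only [knot]
  push_cast
  ring

lemma splineSum_splineCoef_knot_left (hk : 0 < k) :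
    splineSum k0 k (D + 7) (splineCoef D k0 k β) (knot k0 k 1) = knot k0 k 1 := by
  refine (splineSum_knot hk _ (i := 1) le_rfl (by omega)).trans ?_
  iterate 3 rw [splineCoef_eq_knot_left hk (by omega) (by omega)]
  simp only [knot]
  push_cast
  ring

lemma splineSum_splineCoef_knot_right (hD : 1 ≤ D) (hk : 0 < k) :
    splineSum k0 k (D + 7) (splineCoef D k0 k β) (knot k0 k (D + 5)) = knot k0 k (D + 5) := by
  refine (splineSum_knot_add_one hk _ (i := D + 4) (by omega) le_rfl).trans ?_
  iterate 3 rw [splineCoef_eq_knot_right hD hk (by omega) (by omega)]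
  simp only [knot]
  push_cast
  ring

end Coefficients

/-- For every `β ∈ ℝ^D`, the transformation `H` is strictly monotonically
increasing on all of `ℝ`. -/
theorem H_strictMono (D : ℕ) (hD : 1 ≤ D) (k0 k : ℝ) (hk : 0 < k)
    (β : Fin D → ℝ) :
    StrictMono (Hfun D k0 k β) := by
  have spline_strictMonoOn :
      StrictMonoOn (splineSum k0 k (D + 7) (splineCoef D k0 k β))
        (Set.Icc (knot k0 k 1) (knot k0 k (D + 5))) :=
    splineSum_strictMonoOn hk (splineCoef_strictMonoOn.mono Set.Icc_subset_Ici_self)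
      (m := 1) (n := D + 5) le_rfl (by omega) le_rfl
  exact strictMono_ite_mem_Icc_id spline_strictMonoOn (splineSum_splineCoef_knot_left hk)
    (splineSum_splineCoef_knot_right hD hk)

end
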